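/- arXiv:math-ph/0303027 — 5 statements merged into one kernel-verified Lean document; each statement's English description precedes it below -/
import Mathlib

section
/- Let u ∈ ℝ, u ≠ 0, and let b ∈ ℝ, b ≠ 0. Then the improper integral lim_{R→∞} ∫_{-R}^{R} e^{-isb/u}/(s - iu) ds exists and equals 2πi · sgn(u) · e^{b} if b < 0, and equals 0 if b > 0. -/
open Real Filter MeasureTheory intervalIntegral

open scoped FourierTransform Topology

noncomputable def ff (x : ℝ) : ℂ := ((max x 0 * Real.exp (-x) : ℝ) : ℂ)

lemma ff_cont : Continuous ff := by unfold ff; fun_prop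

lemma ff_intOn : IntegrableOn (fun x : ℝ => x * Real.exp (-x)) (Set.Ioi 0) := by
  refine (Real.GammaIntegral_convergent (s := 2) (by norm_num)).congr_fun (fun x hx => ?_)
    measurableSet_Ioi
  have : (2:ℝ) - 1 = 1 := by norm_num
  simp only [this, Real.rpow_one, mul_comm]

lemma ff_eq : ff = Set.indicator (Set.Ioi 0) (fun x : ℝ => ((x * Real.exp (-x) : ℝ) : ℂ)) := by
  ext x
  by_cases hx : 0 < x
  · simp [ff, hx, max_eq_left hx.le]
  · simp [ff, hx, max_eq_right (not_lt.mp hx)]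

lemma ff_int : Integrable ff := by
  rw [ff_eq, integrable_indicator_iff measurableSet_Ioi]
  exact ff_intOn.ofReal

lemma ne_aux (w : ℝ) : (1 + Complex.I * w : ℂ) ≠ 0 := by
  intro h
  have := congrArg Complex.re h
  simp at this

lemma int_aux (w : ℝ) :
    ∫ x in Set.Ioi (0:ℝ), (x:ℂ) * Complex.exp (-(1 + Complex.I * w) * x)
      = ((1 + Complex.I * w) ^ 2)⁻¹ := by
  set a : ℂ := 1 + Complex.I * w with ha
  have ha0 : a ≠ 0 := ne_aux w
  have hnorm : ∀ x : ℝ, ‖Complex.exp (-a * x)‖ = Real.exp (-x) := by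
    intro x; rw [Complex.norm_exp]; simp [ha]
  have hd : ∀ x ∈ Set.Ici (0:ℝ), HasDerivAt
      (fun x : ℝ => -((x:ℂ) / a + 1 / a ^ 2) * Complex.exp (-a * x))
      ((x:ℂ) * Complex.exp (-a * x)) x := by
    intro x _
    have h1 : HasDerivAt (fun x : ℝ => (x:ℂ)) 1 x := Complex.ofRealCLM.hasDerivAt
    have h2 := ((h1.div_const a).add_const (1 / a ^ 2)).neg.mul ((h1.const_mul (-a)).cexp)
    refine h2.congr_deriv ?_
    simp only [Pi.neg_apply]
    field_simp
    ring
  have hi : IntegrableOn (fun x : ℝ => (x:ℂ) * Complex.exp (-a * x)) (Set.Ioi 0) := by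
    refine Integrable.mono' ff_intOn ?_ ?_
    · exact (by fun_prop : Continuous fun x : ℝ => (x:ℂ) * Complex.exp (-a * x)).aestronglyMeasurable
    · filter_upwards [ae_restrict_mem measurableSet_Ioi] with x hx
      rw [norm_mul, hnorm, Complex.norm_real, Real.norm_of_nonneg (le_of_lt hx)]
  have e0 : Tendsto (fun x : ℝ => Real.exp (-x)) atTop (𝓝 0) :=
    Real.tendsto_exp_neg_atTop_nhds_zero
  have e1 : Tendsto (fun x : ℝ => x * Real.exp (-x)) atTop (𝓝 0) := by
    simpa using Real.tendsto_pow_mul_exp_neg_atTop_nhds_zero 1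
  have ht : Tendsto (fun x : ℝ => -((x:ℂ) / a + 1 / a ^ 2) * Complex.exp (-a * x)) atTop (𝓝 0) := by
    rw [tendsto_zero_iff_norm_tendsto_zero]
    have h3 : Tendsto (fun x : ℝ => ‖a‖⁻¹ * (x * Real.exp (-x)) + ‖1 / a ^ 2‖ * Real.exp (-x))
        atTop (𝓝 0) := by
      have := (e1.const_mul (‖a‖⁻¹)).add (e0.const_mul (‖1 / a ^ 2‖))
      rwa [mul_zero, mul_zero, add_zero] at this
    refine squeeze_zero' (Eventually.of_forall fun _ => norm_nonneg _) ?_ h3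
    filter_upwards [eventually_ge_atTop 0] with x hx
    rw [norm_mul, hnorm, norm_neg]
    have := norm_add_le ((x:ℂ) / a) (1 / a ^ 2)
    rw [norm_div, Complex.norm_real, Real.norm_of_nonneg hx] at this
    calc _ ≤ (x / ‖a‖ + ‖1 / a ^ 2‖) * Real.exp (-x) := by gcongr
      _ = _ := by ring
  rw [integral_Ioi_of_hasDerivAt_of_tendsto' hd hi ht]
  simp

lemma fourier_ff (w : ℝ) : 𝓕 ff w = ((1 + Complex.I * ((2 * π * w : ℝ) : ℂ)) ^ 2)⁻¹ := by
  rw [Real.fourier_real_eq_integral_exp_smul, ← int_aux, ← MeasureTheory.integral_indicator measurableSet_Ioi,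
    ff_eq]
  congr 1
  ext x
  by_cases hx : 0 < x
  · simp only [Set.mem_Ioi, hx, Set.indicator_of_mem, smul_eq_mul]
    push_cast
    rw [mul_left_comm, ← Complex.exp_add]
    congr 2
    ring
  · simp [hx]

lemma intg (b : ℝ) :
    Integrable (fun t : ℝ => Complex.exp (-Complex.I * t * b) * ((1 + Complex.I * t) ^ 2)⁻¹) := by
  refine Integrable.mono' integrable_inv_one_add_sq ?_ ?_
  · refine Continuous.aestronglyMeasurable ?_
    refine Continuous.mul (by fun_prop) (Continuous.inv₀ (by fun_prop) ?_)
    intro t; exact pow_ne_zero _ (ne_aux t)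
  · refine Eventually.of_forall fun t => ?_
    have h1 : ‖Complex.exp (-Complex.I * t * b)‖ = 1 := by
      rw [Complex.norm_exp]; simp
    rw [norm_mul, h1, one_mul, norm_inv, norm_pow, ← Complex.normSq_eq_norm_sq,
      Complex.normSq_apply]
    simp [sq]

lemma inv_ff (b : ℝ) :
    ∫ t : ℝ, Complex.exp (-Complex.I * t * b) * ((1 + Complex.I * t) ^ 2)⁻¹
      = 2 * π * ff (-b) := by
  have hF : Integrable (𝓕 ff) := by
    have h := (intg 0).comp_mul_left' (R := 2 * π) (by positivity)
    refine h.congr (Eventually.of_forall fun w => ?_)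
    simp only [fourier_ff]
    simp
  have h := ff_int.fourierInv_fourier_eq hF (v := -b) ff_cont.continuousAt
  rw [Real.fourierInv_eq'] at h
  have h2 := Measure.integral_comp_mul_left
    (fun t : ℝ => Complex.exp (-Complex.I * t * b) * ((1 + Complex.I * t) ^ 2)⁻¹) (2 * π)
  have h3 : ∫ v : ℝ, Complex.exp (((2 * π * inner ℝ v (-b) : ℝ) : ℂ) * Complex.I) • 𝓕 ff v
     = ∫ x : ℝ, Complex.exp (-Complex.I * ((2 * π * x : ℝ) : ℂ) * b) *
        ((1 + Complex.I * ((2 * π * x : ℝ) : ℂ)) ^ 2)⁻¹ := by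
    congr 1
    ext v
    rw [fourier_ff, smul_eq_mul]
    congr 2
    simp
    ring
  rw [← h, h3, h2, abs_of_pos (by positivity), Complex.real_smul]
  push_cast
  have : (2 * π:ℂ) ≠ 0 := mul_ne_zero two_ne_zero (by exact_mod_cast Real.pi_ne_zero)
  rw [mul_inv_cancel_left₀ this]

lemma bdry (b : ℝ) (l : Filter ℝ) (hl : Tendsto (fun t : ℝ => |t|) l atTop) :
    Tendsto (fun t : ℝ => (1 + Complex.I * t)⁻¹ * Complex.exp (-Complex.I * t * b)) l (𝓝 0) := by
  rw [tendsto_zero_iff_norm_tendsto_zero]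
  refine squeeze_zero' (Eventually.of_forall fun _ => norm_nonneg _) ?_ (tendsto_inv_atTop_zero.comp hl)
  filter_upwards [hl.eventually_gt_atTop 0] with t ht
  have h1 : ‖Complex.exp (-Complex.I * t * b)‖ = 1 := by
    rw [Complex.norm_exp]; simp
  rw [norm_mul, h1, mul_one, norm_inv]
  simp only [Function.comp]
  gcongr
  simpa using Complex.abs_im_le_norm (1 + Complex.I * t)

lemma main1 (b : ℝ) (hb : b ≠ 0) :
    Tendsto (fun R : ℝ => ∫ t in (-R)..R, Complex.exp (-Complex.I * t * b) / ((t:ℂ) - Complex.I))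
      atTop (𝓝 (2 * π * Complex.I * (-ff (-b) / b))) := by
  have hbc : (b:ℂ) ≠ 0 := by exact_mod_cast hb
  have hI := Complex.I_ne_zero
  -- integration by parts
  have key : ∀ R : ℝ, ∫ t in (-R)..R, Complex.exp (-Complex.I * t * b) / ((t:ℂ) - Complex.I)
      = (-1 / (b:ℂ)) * ((1 + Complex.I * (R:ℝ))⁻¹ * Complex.exp (-Complex.I * (R:ℝ) * b)
        - (1 + Complex.I * ((-R:ℝ):ℂ))⁻¹ * Complex.exp (-Complex.I * ((-R:ℝ):ℂ) * b))
        + (-Complex.I / b) * ∫ t in (-R)..R,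
          Complex.exp (-Complex.I * t * b) * ((1 + Complex.I * t) ^ 2)⁻¹ := by
    intro R
    have hd1 : ∀ x : ℝ, HasDerivAt (fun t : ℝ => (1 + Complex.I * t : ℂ)⁻¹)
        (-Complex.I / (1 + Complex.I * x) ^ 2) x := by
      intro x
      have h1 : HasDerivAt (fun x : ℝ => (x:ℂ)) 1 x := Complex.ofRealCLM.hasDerivAt
      have h2 := ((h1.const_mul Complex.I).const_add 1).inv (ne_aux x)
      rw [mul_one] at h2
      exact h2
    have hd2 : ∀ x : ℝ, HasDerivAt (fun t : ℝ => Complex.exp (-Complex.I * t * b))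
        (Complex.exp (-Complex.I * x * b) * (-Complex.I * b)) x := by
      intro x
      have h1 : HasDerivAt (fun x : ℝ => (x:ℂ)) 1 x := Complex.ofRealCLM.hasDerivAt
      simpa using ((h1.const_mul (-Complex.I)).mul_const (b:ℂ)).cexp
    have hp := intervalIntegral.integral_mul_deriv_eq_deriv_mul (a := -R) (b := R)
      (fun x _ => hd1 x) (fun x _ => hd2 x)
      (Continuous.intervalIntegrable (Continuous.div (by fun_prop) (by fun_prop)
        (fun x => pow_ne_zero _ (ne_aux x))) _ _)
      (Continuous.intervalIntegrable (by fun_prop) _ _)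
    have e1 : ∫ t in (-R)..R, Complex.exp (-Complex.I * t * b) / ((t:ℂ) - Complex.I)
      = (-1 / (b:ℂ)) * ∫ x in (-R)..R, (1 + Complex.I * x : ℂ)⁻¹ *
          (Complex.exp (-Complex.I * x * b) * (-Complex.I * b)) := by
      rw [← intervalIntegral.integral_const_mul]
      congr 1
      ext x
      have h0 := ne_aux x
      have h1 : (x:ℂ) - Complex.I = -Complex.I * (1 + Complex.I * x) := by
        linear_combination (x:ℂ) * Complex.I_sq
      rw [h1]
      field_simp
      linear_combination (-1:ℂ) * Complex.I_sq
    have e2 : ∫ x in (-R)..R, -Complex.I / (1 + Complex.I * x) ^ 2 *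
          Complex.exp (-Complex.I * x * b) = -Complex.I * ∫ t in (-R)..R,
          Complex.exp (-Complex.I * t * b) * ((1 + Complex.I * t) ^ 2)⁻¹ := by
      rw [← intervalIntegral.integral_const_mul]
      congr 1
      ext x
      ring
    rw [e1, hp, e2]
    ring
  simp_rw [key]
  have t1 := bdry b atTop tendsto_abs_atTop_atTop
  have t2 := (bdry b atBot tendsto_abs_atBot_atTop).comp tendsto_neg_atTop_atBot
  have t3 := intervalIntegral_tendsto_integral (intg b) tendsto_neg_atTop_atBot tendsto_id
  have := ((t1.sub t2).const_mul (-1 / (b:ℂ))).add (t3.const_mul (-Complex.I / b))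
  rw [inv_ff] at this
  have e : 2 * π * Complex.I * (-ff (-b) / b)
      = -1 / (b:ℂ) * (0 - 0) + -Complex.I / b * (2 * π * ff (-b)) := by ring
  rw [e]
  exact this

/-- For `u ≠ 0` and `b ≠ 0`, the symmetric improper integral
`lim_{R→∞} ∫_{-R}^{R} e^{-isb/u}/(s - iu) ds` exists and equals
`2πi · sgn(u) · e^b` if `b < 0`, and `0` if `b > 0`. -/
theorem statement0 (u b : ℝ) (hu : u ≠ 0) (hb : b ≠ 0) :
    Tendsto
      (fun R : ℝ =>
        ∫ s in (-R)..R,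
          Complex.exp (-Complex.I * s * b / u) / ((s : ℂ) - Complex.I * u))
      atTop
      (nhds (if b < 0 then
          2 * Real.pi * Complex.I * Real.sign u * Real.exp b
        else 0)) := by
  have hbc : (b:ℂ) ≠ 0 := by exact_mod_cast hb
  have huc : (u:ℂ) ≠ 0 := by exact_mod_cast hu
  have hval : (if b < 0 then 2 * Real.pi * Complex.I * Real.sign u * Real.exp b else 0 : ℂ)
      = Real.sign u * (2 * π * Complex.I * (-ff (-b) / b)) := by
    split_ifs with h
    · simp only [ff, max_eq_left (by linarith : (0:ℝ) ≤ -b), neg_neg]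
      push_cast
      field_simp
    · simp [ff, max_eq_right (by linarith : -b ≤ (0:ℝ))]
  rw [hval]
  have hsc : ∀ R : ℝ, ∫ s in (-R)..R,
      Complex.exp (-Complex.I * s * b / u) / ((s : ℂ) - Complex.I * u)
      = ∫ t in (-(u⁻¹ * R))..(u⁻¹ * R),
        Complex.exp (-Complex.I * t * b) / ((t:ℂ) - Complex.I) := by
    intro R
    have := intervalIntegral.smul_integral_comp_mul_left (a := -R) (b := R)
      (fun t : ℝ => Complex.exp (-Complex.I * t * b) / ((t:ℂ) - Complex.I)) u⁻¹
    rw [← mul_neg, ← this, ← intervalIntegral.integral_smul]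
    congr 1
    ext s
    have : ((u⁻¹ * s : ℝ) : ℂ) - Complex.I = (u:ℂ)⁻¹ * ((s:ℂ) - Complex.I * u) := by
      push_cast; field_simp
    rw [this, Complex.real_smul]
    have h2 : -Complex.I * ((u⁻¹ * s : ℝ) : ℂ) * b = -Complex.I * s * b / u := by
      push_cast; field_simp
    rw [h2]
    push_cast
    rw [mul_div_assoc', mul_div_mul_left _ _ (inv_ne_zero huc)]
  simp_rw [hsc]
  have hm := main1 b hb
  rcases lt_or_gt_of_ne hu with h | h
  · rw [Real.sign_of_neg h]
    have ht : Tendsto (fun R : ℝ => (-u⁻¹) * R) atTop atTop :=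
      tendsto_id.const_mul_atTop (by simpa using h)
    have := (hm.comp ht).neg
    convert this using 2 with R
    · simp only [Function.comp]
      rw [intervalIntegral.integral_symm]
      simp
    · push_cast; ring
  · rw [Real.sign_of_pos h]
    have ht : Tendsto (fun R : ℝ => u⁻¹ * R) atTop atTop :=
      tendsto_id.const_mul_atTop (by simpa using h)
    rw [Complex.ofReal_one, one_mul]
    exact hm.comp ht
end

section
/- Let a > 0, ω ∈ ℝ, and 0 ≤ ρ < a. With r̃(ξ) = √(ρ² + (ξ - ia)²) (principal square root), the one-sided limits of B_ω(ξ) = e^{iω r̃(ξ)}/(4π r̃(ξ)) as ξ → 0⁺ and ξ → 0⁻ exist, and their difference is lim_{ξ→0⁺} B_ω(ξ) - lim_{ξ→0⁻} B_ω(ξ) = i cosh(ω√(a² - ρ²)) / (2π√(a² - ρ²)). For ρ > a the two one-sided limits coincide. -/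
open Real Filter Topology

theorem aux_B (ω : ℝ) (f : ℝ → ℂ) (l : Filter ℝ) (c : ℂ) (hc : c ≠ 0) (h : Tendsto f l (nhds c)) :
    Tendsto (fun ξ => Complex.exp (Complex.I * (ω : ℂ) * f ξ) / (4 * (Real.pi : ℂ) * f ξ)) l
      (nhds (Complex.exp (Complex.I * (ω : ℂ) * c) / (4 * (Real.pi : ℂ) * c))) := by
  have hpi : (Real.pi : ℂ) ≠ 0 := by exact_mod_cast Real.pi_ne_zero
  refine Tendsto.div ?_ (h.const_mul _) (by simp [hc, hpi])
  exact (Complex.continuous_exp.tendsto _).comp (h.const_mul _)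

theorem aux_cpow (f : ℝ → ℂ) (hf : ∀ x, f x ≠ 0) (l : Filter ℝ) (c : ℂ)
    (h : Tendsto (fun x => Complex.log (f x)) l (nhds c)) :
    Tendsto (fun x => f x ^ ((1 : ℂ) / 2)) l (nhds (Complex.exp (c * (1 / 2)))) := by
  have : (fun x => f x ^ ((1 : ℂ) / 2)) = fun x => Complex.exp (Complex.log (f x) * (1 / 2)) := by
    funext x
    rw [Complex.cpow_def_of_ne_zero (hf x)]
  rw [this]
  exact (Complex.continuous_exp.tendsto _).comp (h.mul_const _)

theorem aux_exp (s : ℝ) (hs : 0 < s) :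
    Complex.exp ((Real.log (s ^ 2) : ℝ) * (1 / 2)) = s := by
  rw [Real.log_pow]
  have : (((2 : ℕ) * Real.log s : ℝ) : ℂ) * (1 / 2) = (Real.log s : ℝ) := by
    push_cast; ring
  rw [this, ← Complex.ofReal_exp, Real.exp_log hs]

/-- jump of the time-harmonic complex-source beam
`B_ω(ξ) = e^{iω r̃(ξ)}/(4π r̃(ξ))`, `r̃(ξ) = √(ρ² + (ξ - ia)²)`, across the
plane `ξ = 0`: for `ρ < a` the one-sided limits exist and their difference is
`i cosh(ω√(a² - ρ²))/(2π√(a² - ρ²))`; for `ρ > a` the one-sided limits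
coincide. -/
theorem statement9 (a ω ρ : ℝ) (ha : 0 < a) (hρ : 0 ≤ ρ) :
    let rt : ℝ → ℂ := fun ξ =>
      ((ρ : ℂ) ^ 2 + ((ξ : ℂ) - Complex.I * (a : ℂ)) ^ 2) ^ ((1 : ℂ) / 2)
    let B : ℝ → ℂ := fun ξ =>
      Complex.exp (Complex.I * (ω : ℂ) * rt ξ) / (4 * (Real.pi : ℂ) * rt ξ)
    (ρ < a →
      ∃ Lp Lm : ℂ,
        Tendsto B (nhdsWithin 0 (Set.Ioi 0)) (nhds Lp) ∧
        Tendsto B (nhdsWithin 0 (Set.Iio 0)) (nhds Lm) ∧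
        Lp - Lm =
          Complex.I * (Real.cosh (ω * Real.sqrt (a ^ 2 - ρ ^ 2)) : ℂ) /
            (2 * (Real.pi : ℂ) * (Real.sqrt (a ^ 2 - ρ ^ 2) : ℂ))) ∧
    (a < ρ →
      ∃ L : ℂ,
        Tendsto B (nhdsWithin 0 (Set.Ioi 0)) (nhds L) ∧
        Tendsto B (nhdsWithin 0 (Set.Iio 0)) (nhds L)) := by
  intro rt B
  set z : ℝ → ℂ := fun ξ => (ρ : ℂ) ^ 2 + ((ξ : ℂ) - Complex.I * (a : ℂ)) ^ 2 with hz
  have hre : ∀ ξ, (z ξ).re = ρ ^ 2 + ξ ^ 2 - a ^ 2 := by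
    intro ξ; simp [hz, pow_two]; ring
  have him : ∀ ξ, (z ξ).im = -(2 * a * ξ) := by
    intro ξ; simp [hz, pow_two]; ring
  have hcont : Continuous z := by simp only [hz]; fun_prop
  have hne : ρ ≠ a → ∀ ξ, z ξ ≠ 0 := by
    intro h ξ h0
    have h1 := him ξ
    have h2 := hre ξ
    rw [h0] at h1 h2
    simp only [Complex.zero_re, Complex.zero_im] at h1 h2
    have h3 : ξ = 0 := by
      have : a * ξ = 0 := by linarith
      exact (mul_eq_zero.mp this).resolve_left ha.ne'
    subst h3
    apply h
    nlinarith [sq_nonneg (ρ - a)]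
  constructor
  · intro hlt
    set s := Real.sqrt (a ^ 2 - ρ ^ 2) with hs
    have hpos : 0 < a ^ 2 - ρ ^ 2 := by nlinarith
    have hs0 : 0 < s := Real.sqrt_pos.mpr hpos
    have hss : s ^ 2 = a ^ 2 - ρ ^ 2 := Real.sq_sqrt hpos.le
    have hsc : (s : ℂ) ≠ 0 := by exact_mod_cast hs0.ne'
    have hz0 : z 0 = ((-(s ^ 2) : ℝ) : ℂ) := by
      apply Complex.ext
      · rw [hre, Complex.ofReal_re, hss]; ring
      · rw [him, Complex.ofReal_im]; ring
    have hnorm : ‖z 0‖ = s ^ 2 := by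
      rw [hz0, Complex.norm_real, norm_neg, Real.norm_of_nonneg (by positivity)]
    have hr : (z 0).re < 0 := by rw [hre]; nlinarith
    have hi : (z 0).im = 0 := by rw [him]; ring
    have h1 := Complex.tendsto_log_nhdsWithin_im_neg_of_re_neg_of_im_zero hr hi
    have h2 := Complex.tendsto_log_nhdsWithin_im_nonneg_of_re_neg_of_im_zero hr hi
    rw [hnorm] at h1 h2
    have t1 : Tendsto z (nhdsWithin 0 (Set.Ioi 0)) (nhdsWithin (z 0) {z : ℂ | z.im < 0}) := by
      refine tendsto_nhdsWithin_iff.mpr ⟨hcont.continuousAt.tendsto.mono_left nhdsWithin_le_nhds, ?_⟩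
      filter_upwards [self_mem_nhdsWithin] with x hx
      have hx : 0 < x := hx
      show (z x).im < 0
      rw [him]; have := mul_pos ha hx; linarith
    have t2 : Tendsto z (nhdsWithin 0 (Set.Iio 0)) (nhdsWithin (z 0) {z : ℂ | 0 ≤ z.im}) := by
      refine tendsto_nhdsWithin_iff.mpr ⟨hcont.continuousAt.tendsto.mono_left nhdsWithin_le_nhds, ?_⟩
      filter_upwards [self_mem_nhdsWithin] with x hx
      have hx : x < 0 := hx
      show 0 ≤ (z x).im
      rw [him]; have := mul_pos_of_neg_of_neg (neg_lt_zero.mpr ha) hx; linarith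
    have e1 : Complex.exp (((Real.log (s ^ 2) : ℝ) - Real.pi * Complex.I) * (1 / 2)) = -(Complex.I * s) := by
      rw [sub_mul, sub_eq_add_neg, Complex.exp_add, aux_exp s hs0,
        show -(Real.pi * Complex.I * (1 / 2)) = -(Real.pi / 2 * Complex.I) by ring,
        Complex.exp_neg, Complex.exp_pi_div_two_mul_I, Complex.inv_I]
      ring
    have e2 : Complex.exp (((Real.log (s ^ 2) : ℝ) + Real.pi * Complex.I) * (1 / 2)) = Complex.I * s := by
      rw [add_mul, Complex.exp_add, aux_exp s hs0,
        show (Real.pi * Complex.I * (1 / 2)) = (Real.pi / 2 * Complex.I) by ring,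
        Complex.exp_pi_div_two_mul_I]
      ring
    have r1 := aux_cpow z (hne hlt.ne) _ _ (h1.comp t1)
    have r2 := aux_cpow z (hne hlt.ne) _ _ (h2.comp t2)
    rw [e1] at r1
    rw [e2] at r2
    refine ⟨_, _, aux_B ω rt _ _ (by simp [hsc]) r1, aux_B ω rt _ _ (by simp [hsc]) r2, ?_⟩
    have hpi : (Real.pi : ℂ) ≠ 0 := by exact_mod_cast Real.pi_ne_zero
    have hI := Complex.I_sq
    rw [show Complex.I * (ω : ℂ) * -(Complex.I * s) = ω * s by linear_combination (-(ω * s : ℂ)) * hI,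
      show Complex.I * (ω : ℂ) * (Complex.I * s) = -(ω * s) by linear_combination ((ω * s : ℂ)) * hI,
      Complex.ofReal_cosh, Complex.cosh]
    push_cast
    have hI0 := Complex.I_ne_zero
    field_simp
    rw [hI]
    ring
  · intro hlt
    have hsl : z 0 ∈ Complex.slitPlane := by
      left; rw [hre]; nlinarith
    have r := aux_cpow z (hne hlt.ne') _ _ ((hcont.continuousAt (x := 0)).clog hsl).tendsto
    have hB := aux_B ω rt _ _ (Complex.exp_ne_zero _) r
    exact ⟨_, hB.mono_left nhdsWithin_le_nhds, hB.mono_left nhdsWithin_le_nhds⟩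
end

section
/- Let a > 0, h > 0 and w ∈ ℂ. Then h a ∫₀^a cosh(w q) J₁(h √(a² - q²)) / √(a² - q²) dq = cosh(w a) - cos(a √(h² - w²)), where cos denotes the complex cosine, √(h² - w²) is any complex square root of h² - w² (the right-hand side is even in it), and J₁ is the Bessel function of the first kind of order 1, given by J₁(x) = (1/π) ∫₀^π cos(θ - x sin θ) dθ. -/
open Real MeasureTheory intervalIntegral

/-- Bessel function of the first kind of order 1,
`J₁(x) = (1/π) ∫₀^π cos(θ - x sin θ) dθ`. -/
noncomputable def besselJ1 (x : ℝ) : ℝ :=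
  (1 / Real.pi) * ∫ θ in (0 : ℝ)..Real.pi, Real.cos (θ - x * Real.sin θ)

theorem aux_congr {ι E : Type} [NormedAddCommGroup E] {f g : ι → E} {s : E} (hf : HasSum f s)
    (e : ∀ i, g i = f i) : HasSum g s := by
  have : g = f := funext e
  rw [this]; exact hf

theorem aux_beta (a : ℝ) (k m : ℕ) :
    ∫ q in (0 : ℝ)..a, q ^ (2 * m) * (a ^ 2 - q ^ 2) ^ k =
      a ^ (2 * m + 2 * k + 1) * (2 ^ (2 * k + 1) * (k.factorial : ℝ) * ((2 * m).factorial : ℝ) *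
        ((m + k + 1).factorial : ℝ) / ((m.factorial : ℝ) * ((2 * m + 2 * k + 2).factorial : ℝ))) := by
  induction k generalizing m with
  | zero =>
    have h0 : ((2 * m).factorial : ℝ) ≠ 0 := by positivity
    have h1 : (m.factorial : ℝ) ≠ 0 := by positivity
    simp only [pow_zero, mul_one, integral_pow, Nat.factorial_succ, mul_zero, add_zero,
      Nat.factorial_zero]
    push_cast
    field_simp
    ring
  | succ k ih =>
    have e : ∀ q : ℝ, q ^ (2 * m) * (a ^ 2 - q ^ 2) ^ (k + 1) =
        a ^ 2 * (q ^ (2 * m) * (a ^ 2 - q ^ 2) ^ k)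
          - q ^ (2 * (m + 1)) * (a ^ 2 - q ^ 2) ^ k := by
      intro q; ring
    simp_rw [e]
    rw [intervalIntegral.integral_sub, intervalIntegral.integral_const_mul, ih m, ih (m + 1)]
    · have h0 : ((2 * m).factorial : ℝ) ≠ 0 := by positivity
      have h1 : (m.factorial : ℝ) ≠ 0 := by positivity
      have h2 : (k.factorial : ℝ) ≠ 0 := by positivity
      have h3 : ((m + k).factorial : ℝ) ≠ 0 := by positivity
      have h4 : ((2 * m + 2 * k).factorial : ℝ) ≠ 0 := by positivity
      have e1 : m + 1 + k + 1 = m + k + 1 + 1 := by ring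
      have e2 : m + (k + 1) + 1 = m + k + 1 + 1 := by ring
      have e3 : 2 * (m + 1) + 2 * k + 2 = 2 * m + 2 * k + 1 + 1 + 1 + 1 := by ring
      have e4 : 2 * m + 2 * (k + 1) + 2 = 2 * m + 2 * k + 1 + 1 + 1 + 1 := by ring
      have e5 : 2 * (m + 1) = 2 * m + 1 + 1 := by ring
      have e6 : 2 * m + 2 * k + 2 = 2 * m + 2 * k + 1 + 1 := by ring
      rw [e1, e2, e3, e4, e6, e5]
      simp only [Nat.factorial_succ]
      push_cast
      field_simp
      ring
    · apply Continuous.intervalIntegrable; fun_prop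
    · apply Continuous.intervalIntegrable; fun_prop

theorem aux_wallis (k : ℕ) :
    (∏ i ∈ Finset.range (k + 1), (2 * (i : ℝ) + 1) / (2 * i + 2)) =
      ((2 * k + 1).factorial : ℝ) / (2 ^ (2 * k + 1) * (k.factorial : ℝ) * ((k + 1).factorial : ℝ)) := by
  induction k with
  | zero => norm_num
  | succ k ih =>
    rw [Finset.prod_range_succ, ih]
    have h2 : (k.factorial : ℝ) ≠ 0 := by positivity
    have h4 : ((2 * k).factorial : ℝ) ≠ 0 := by positivity
    have e : 2 * (k + 1) + 1 = 2 * k + 1 + 1 + 1 := by ring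
    rw [e]
    simp only [Nat.factorial_succ]
    push_cast
    field_simp
    ring

theorem aux_cos (x : ℝ) :
    ∫ θ in (0 : ℝ)..Real.pi, Real.cos θ * Real.cos (x * Real.sin θ) = 0 := by
  by_cases hx : x = 0
  · simp [hx]
  have : ∀ θ ∈ Set.uIcc 0 Real.pi, HasDerivAt (fun θ => Real.sin (x * Real.sin θ) / x)
      (Real.cos θ * Real.cos (x * Real.sin θ)) θ := by
    intro θ _
    have := (((Real.hasDerivAt_sin θ).const_mul x).sin).div_const x
    rw [show Real.cos θ * Real.cos (x * Real.sin θ) =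
      Real.cos (x * Real.sin θ) * (x * Real.cos θ) / x by field_simp]
    exact this
  rw [intervalIntegral.integral_eq_sub_of_hasDerivAt this]
  · simp
  · apply Continuous.intervalIntegrable; fun_prop

theorem aux_J1 (x : ℝ) :
    HasSum (fun k : ℕ => (-1) ^ k * (x / 2) ^ (2 * k + 1) /
      ((k.factorial : ℝ) * ((k + 1).factorial : ℝ))) (besselJ1 x) := by
  have h1 : besselJ1 x = (1 / Real.pi) *
      ∫ θ in (0 : ℝ)..Real.pi, Real.sin θ * Real.sin (x * Real.sin θ) := by
    unfold besselJ1
    simp_rw [Real.cos_sub]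
    rw [intervalIntegral.integral_add, aux_cos, zero_add]
    · apply Continuous.intervalIntegrable; fun_prop
    · apply Continuous.intervalIntegrable; fun_prop
  rw [h1]
  have h2 : HasSum (fun k : ℕ => ∫ θ in (0 : ℝ)..Real.pi,
      Real.sin θ * ((-1) ^ k * (x * Real.sin θ) ^ (2 * k + 1) / ((2 * k + 1).factorial : ℝ)))
      (∫ θ in (0 : ℝ)..Real.pi, Real.sin θ * Real.sin (x * Real.sin θ)) := by
    apply intervalIntegral.hasSum_integral_of_dominated_convergence
      (fun k _ => |x| ^ (2 * k + 1) / ((2 * k + 1).factorial : ℝ))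
    · intro k
      apply Continuous.aestronglyMeasurable
      fun_prop
    · intro k
      refine Filter.Eventually.of_forall fun t _ => ?_
      have hs := Real.abs_sin_le_one t
      rw [Real.norm_eq_abs, abs_mul, abs_div, abs_mul, abs_pow, abs_pow, abs_neg, abs_one, one_pow,
        one_mul, abs_mul, Nat.abs_cast]
      calc |Real.sin t| * ((|x| * |Real.sin t|) ^ (2 * k + 1) / ((2 * k + 1).factorial : ℝ))
          ≤ 1 * ((|x| * 1) ^ (2 * k + 1) / ((2 * k + 1).factorial : ℝ)) := by gcongr
        _ = _ := by ring
    · exact Filter.Eventually.of_forall fun t _ => (Real.hasSum_sinh |x|).summable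
    · simp
    · exact Filter.Eventually.of_forall fun t _ => (Real.hasSum_sin _).mul_left _
  have h3 := h2.mul_left (1 / Real.pi)
  refine aux_congr h3 fun k => ?_
  have e : ∀ θ : ℝ, Real.sin θ * ((-1) ^ k * (x * Real.sin θ) ^ (2 * k + 1) /
      ((2 * k + 1).factorial : ℝ)) =
      ((-1) ^ k * x ^ (2 * k + 1) / ((2 * k + 1).factorial : ℝ)) * Real.sin θ ^ (2 * (k + 1)) := by
    intro θ; ring
  simp_rw [e]
  rw [intervalIntegral.integral_const_mul, integral_sin_pow_even, aux_wallis]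
  have := Real.pi_ne_zero
  rw [div_pow]
  field_simp

theorem aux_binom (x y : ℂ) (n : ℕ) :
    ∑ p ∈ Finset.HasAntidiagonal.antidiagonal n, ((n + 1).choose (p.1 + 1) : ℂ) * (y ^ (p.1 + 1) * x ^ p.2) =
      (x + y) ^ (n + 1) - x ^ (n + 1) := by
  rw [add_comm x y, add_pow, Finset.sum_range_succ', Finset.Nat.sum_antidiagonal_eq_sum_range_succ_mk]
  simp only [pow_zero, Nat.sub_zero, Nat.choose_zero_right, Nat.cast_one, one_mul, mul_one,
    add_sub_cancel_right, Nat.succ_eq_add_one]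
  refine Finset.sum_congr rfl fun k _ => ?_
  rw [Nat.add_sub_add_right]
  ring

theorem aux_term (a h : ℝ) (w : ℂ) (k m : ℕ) :
    (h : ℂ) * (a : ℂ) * (w ^ (2 * m) / ((2 * m).factorial : ℂ) *
      (((-1) ^ k * (h / 2) ^ (2 * k + 1) /
      ((k.factorial : ℝ) * ((k + 1).factorial : ℝ)) : ℝ) : ℂ) *
      ((∫ q in (0 : ℝ)..a, q ^ (2 * m) * (a ^ 2 - q ^ 2) ^ k : ℝ) : ℂ)) =
    - ((a : ℂ) ^ (2 * (k + m + 1)) / ((2 * (k + m + 1)).factorial : ℂ)) *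
     (((k + m + 1).choose (k + 1) : ℂ) * ((-(h : ℂ) ^ 2) ^ (k + 1) * (w ^ 2) ^ m)) := by
  rw [aux_beta]
  have hc : ((k + m + 1).choose (k + 1) : ℂ) =
      ((k + m + 1).factorial : ℂ) / (((k + 1).factorial : ℂ) * (m.factorial : ℂ)) := by
    rw [Nat.cast_choose ℂ (by omega)]
    congr 4
    omega
  rw [hc]
  have e1 : m + k + 1 = k + m + 1 := by ring
  have e2 : 2 * m + 2 * k + 2 = 2 * (k + m + 1) := by ring
  rw [e1, e2]
  have h0 : ((2 * m).factorial : ℂ) ≠ 0 := by exact_mod_cast Nat.factorial_ne_zero _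
  have h1 : (m.factorial : ℂ) ≠ 0 := by exact_mod_cast Nat.factorial_ne_zero _
  have h2 : (k.factorial : ℂ) ≠ 0 := by exact_mod_cast Nat.factorial_ne_zero _
  have h3 : ((k + 1).factorial : ℂ) ≠ 0 := by exact_mod_cast Nat.factorial_ne_zero _
  have h4 : ((2 * (k + m + 1)).factorial : ℂ) ≠ 0 := by exact_mod_cast Nat.factorial_ne_zero _
  push_cast
  rw [div_pow, neg_pow ((h : ℂ) ^ 2)]
  field_simp
  ring

theorem aux_int (a h : ℝ) (ha : 0 < a) (hh : 0 < h) (w : ℂ) :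
    HasSum (fun p : ℕ × ℕ => w ^ (2 * p.2) / ((2 * p.2).factorial : ℂ) *
      (((-1) ^ p.1 * (h / 2) ^ (2 * p.1 + 1) /
      ((p.1.factorial : ℝ) * ((p.1 + 1).factorial : ℝ)) : ℝ) : ℂ) *
      ((∫ q in (0 : ℝ)..a, q ^ (2 * p.2) * (a ^ 2 - q ^ 2) ^ p.1 : ℝ) : ℂ))
    (∫ q in (0 : ℝ)..a,
          Complex.cosh (w * (q : ℂ)) *
            ((besselJ1 (h * Real.sqrt (a ^ 2 - q ^ 2)) : ℂ) /
              (Real.sqrt (a ^ 2 - q ^ 2) : ℂ))) := by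
  set c : ℕ → ℝ := fun k => (-1) ^ k * (h / 2) ^ (2 * k + 1) /
      ((k.factorial : ℝ) * ((k + 1).factorial : ℝ)) with hc
  have hcs : Summable fun k => |c k| * a ^ (2 * k) := by
    have := (Real.summable_pow_div_factorial ((h * a / 2) ^ 2)).mul_left (h / 2)
    refine Summable.of_nonneg_of_le (fun k => by positivity) (fun k => ?_) this
    have h1 : (1 : ℝ) ≤ ((k + 1).factorial : ℝ) := by exact_mod_cast Nat.factorial_pos _
    have h2 : (0 : ℝ) < (k.factorial : ℝ) := by positivity
    simp only [hc]
    rw [abs_div, abs_mul, abs_pow, abs_neg, abs_one, one_pow, one_mul,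
      abs_of_pos (by positivity : (0 : ℝ) < (h / 2) ^ (2 * k + 1)),
      abs_of_pos (by positivity : (0 : ℝ) < (k.factorial : ℝ) * ((k + 1).factorial : ℝ))]
    calc _ ≤ (h / 2) ^ (2 * k + 1) / ((k.factorial : ℝ) * 1) * a ^ (2 * k) := by gcongr
      _ = _ := by
        rw [← pow_mul, mul_one, show h * a / 2 = h / 2 * a by ring, mul_pow]; ring
  have hws : Summable fun m : ℕ => (‖w‖ * a) ^ (2 * m) / ((2 * m).factorial : ℝ) :=
    (Real.hasSum_cosh _).summable
  have hb : Summable fun p : ℕ × ℕ => (|c p.1| * a ^ (2 * p.1)) *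
      ((‖w‖ * a) ^ (2 * p.2) / ((2 * p.2).factorial : ℝ)) :=
    hcs.mul_of_nonneg hws (fun k => by positivity) (fun k => by positivity)
  have key : HasSum (fun p : ℕ × ℕ => ∫ q in (0 : ℝ)..a,
      ((c p.1 * (a ^ 2 - q ^ 2) ^ p.1 : ℝ) : ℂ) * ((w * (q : ℂ)) ^ (2 * p.2) / ((2 * p.2).factorial : ℂ)))
      (∫ q in (0 : ℝ)..a,
          Complex.cosh (w * (q : ℂ)) *
            ((besselJ1 (h * Real.sqrt (a ^ 2 - q ^ 2)) : ℂ) /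
              (Real.sqrt (a ^ 2 - q ^ 2) : ℂ))) := by
    have hbd : ∀ (p : ℕ × ℕ) (t : ℝ), t ∈ Set.uIoc 0 a →
       ‖((c p.1 * (a ^ 2 - t ^ 2) ^ p.1 : ℝ) : ℂ) *
          ((w * (t : ℂ)) ^ (2 * p.2) / ((2 * p.2).factorial : ℂ))‖ ≤ (|c p.1| * a ^ (2 * p.1)) *
      ((‖w‖ * a) ^ (2 * p.2) / ((2 * p.2).factorial : ℝ)) := by
      intro p t ht
      rw [Set.uIoc_of_le ha.le] at ht
      have h1 : |t| ≤ a := by rw [abs_of_pos ht.1]; exact ht.2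
      have h2 : |a ^ 2 - t ^ 2| ≤ a ^ 2 := by
        rw [abs_of_nonneg] <;> nlinarith [ht.1, ht.2]
      rw [norm_mul, Complex.norm_real, Real.norm_eq_abs, abs_mul, abs_pow, norm_div, norm_pow,
        norm_mul, Complex.norm_real, Real.norm_eq_abs, Complex.norm_natCast, pow_mul a]
      gcongr
    apply intervalIntegral.hasSum_integral_of_dominated_convergence
      (fun p _ => (|c p.1| * a ^ (2 * p.1)) *
      ((‖w‖ * a) ^ (2 * p.2) / ((2 * p.2).factorial : ℝ)))
    · intro p
      apply Continuous.aestronglyMeasurable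
      fun_prop
    · exact fun p => Filter.Eventually.of_forall fun t ht => hbd p t ht
    · exact Filter.Eventually.of_forall fun t _ => hb
    · simp
    · filter_upwards [MeasureTheory.volume.ae_ne a] with t hta ht
      have hsum := Summable.of_norm_bounded hb (fun p => hbd p t ht)
      rw [Set.uIoc_of_le ha.le] at ht
      have hlt : t < a := lt_of_le_of_ne ht.2 hta
      have hpos : 0 < a ^ 2 - t ^ 2 := by nlinarith [ht.1]
      have hs : 0 < Real.sqrt (a ^ 2 - t ^ 2) := Real.sqrt_pos.2 hpos
      have hsq : Real.sqrt (a ^ 2 - t ^ 2) ^ 2 = a ^ 2 - t ^ 2 := Real.sq_sqrt hpos.le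
      have hJ : HasSum (fun k => c k * (a ^ 2 - t ^ 2) ^ k)
          (besselJ1 (h * Real.sqrt (a ^ 2 - t ^ 2)) / Real.sqrt (a ^ 2 - t ^ 2)) := by
        refine aux_congr ((aux_J1 (h * Real.sqrt (a ^ 2 - t ^ 2))).div_const
          (Real.sqrt (a ^ 2 - t ^ 2))) fun k => ?_
        simp only [hc]
        generalize Real.sqrt (a ^ 2 - t ^ 2) = s at hs hsq ⊢
        rw [← hsq]
        have : s ≠ 0 := hs.ne'
        rw [div_pow, div_pow, mul_pow]
        field_simp
        ring
      have hJ' := Complex.hasSum_ofReal.2 hJ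
      have hC := Complex.hasSum_cosh (w * (t : ℂ))
      have := hJ'.mul hC hsum
      rw [mul_comm (Complex.cosh _), ← Complex.ofReal_div]
      exact this
  refine aux_congr key fun p => ?_
  rw [← intervalIntegral.integral_ofReal, ← intervalIntegral.integral_const_mul]
  refine intervalIntegral.integral_congr fun q _ => ?_
  simp only [hc]
  push_cast
  rw [mul_pow]
  ring

/-- the Bessel integral
`h a ∫₀^a cosh(wq) J₁(h√(a²-q²))/√(a²-q²) dq = cosh(wa) - cos(a√(h²-w²))`,
for any complex square root `μ` of `h² - w²` (the right side is even in `μ`). -/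
theorem statement11 (a h : ℝ) (ha : 0 < a) (hh : 0 < h) (w μ : ℂ)
    (hμ : μ ^ 2 = (h : ℂ) ^ 2 - w ^ 2) :
    (h : ℂ) * (a : ℂ) *
        ∫ q in (0 : ℝ)..a,
          Complex.cosh (w * (q : ℂ)) *
            ((besselJ1 (h * Real.sqrt (a ^ 2 - q ^ 2)) : ℂ) /
              (Real.sqrt (a ^ 2 - q ^ 2) : ℂ)) =
      Complex.cosh (w * (a : ℂ)) - Complex.cos ((a : ℂ) * μ) := by
  have h1 := (aux_int a h ha hh w).mul_left ((h : ℂ) * (a : ℂ))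
  simp_rw [aux_term] at h1
  rw [← Finset.HasAntidiagonal.sigmaAntidiagonalEquivProd.hasSum_iff] at h1
  have h2 := h1.sigma (fun n => hasSum_fintype _)
  have h3 := (Complex.hasSum_cosh (w * (a : ℂ))).sub (Complex.hasSum_cos ((a : ℂ) * μ))
  rw [← hasSum_nat_add_iff' 1] at h3
  simp only [Finset.sum_range_one, mul_zero, pow_zero, Nat.factorial_zero, Nat.cast_one, one_mul,
    sub_self, sub_zero] at h3
  refine HasSum.unique h2 (aux_congr h3 fun n => ?_)
  simp only [Function.comp, Finset.HasAntidiagonal.sigmaAntidiagonalEquivProd_apply]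
  rw [Finset.univ_eq_attach, Finset.sum_attach (Finset.HasAntidiagonal.antidiagonal n) (fun p : ℕ × ℕ =>
    - ((a : ℂ) ^ (2 * (p.1 + p.2 + 1)) / ((2 * (p.1 + p.2 + 1)).factorial : ℂ)) *
     (((p.1 + p.2 + 1).choose (p.1 + 1) : ℂ) * ((-(h : ℂ) ^ 2) ^ (p.1 + 1) * (w ^ 2) ^ p.2)))]
  have e : ∀ p ∈ Finset.HasAntidiagonal.antidiagonal n,
    - ((a : ℂ) ^ (2 * (p.1 + p.2 + 1)) / ((2 * (p.1 + p.2 + 1)).factorial : ℂ)) *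
     (((p.1 + p.2 + 1).choose (p.1 + 1) : ℂ) * ((-(h : ℂ) ^ 2) ^ (p.1 + 1) * (w ^ 2) ^ p.2)) =
    - ((a : ℂ) ^ (2 * (n + 1)) / ((2 * (n + 1)).factorial : ℂ)) *
     (((n + 1).choose (p.1 + 1) : ℂ) * ((-(h : ℂ) ^ 2) ^ (p.1 + 1) * (w ^ 2) ^ p.2)) := by
    intro p hp
    rw [Finset.HasAntidiagonal.mem_antidiagonal.1 hp]
  rw [Finset.sum_congr rfl e, ← Finset.mul_sum, aux_binom]
  have e2 : w ^ 2 + -(h : ℂ) ^ 2 = (-1) * μ ^ 2 := by rw [hμ]; ring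
  rw [e2, mul_pow, mul_pow, mul_pow, ← pow_mul, ← pow_mul]
  ring
end

section
/- Let a > 0, h > 0 and w ∈ ℂ. Then ∫₀^a cosh(w q) J₀(h √(a² - q²)) dq = sin(a √(h² - w²)) / √(h² - w²), where sin denotes the complex sine, √(h² - w²) is any complex square root of h² - w² (the right-hand side is even in it, interpreted as a·1 when h² = w²), and J₀ is the Bessel function of the first kind of order 0, given by J₀(x) = (1/π) ∫₀^π cos(x sin θ) dθ. -/
open Real MeasureTheory intervalIntegral

/-- Bessel function of the first kind of order 0,
`J₀(x) = (1/π) ∫₀^π cos(x sin θ) dθ`. -/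
noncomputable def besselJ0 (x : ℝ) : ℝ :=
  (1 / Real.pi) * ∫ θ in (0 : ℝ)..Real.pi, Real.cos (x * Real.sin θ)

/-- the polynomial moment integral -/
theorem mom_integral (a : ℝ) (m : ℕ) : ∀ n : ℕ,
    (∫ q in (0 : ℝ)..a, q ^ (2 * n) * (a ^ 2 - q ^ 2) ^ m) =
      (m.factorial * 4 ^ m * (n + m).factorial * (2 * n).factorial : ℝ) /
        (n.factorial * (2 * (n + m) + 1).factorial) * a ^ (2 * (n + m) + 1) := by
  induction m with
  | zero =>
    intro n
    simp only [pow_zero, mul_one, integral_pow, add_zero, Nat.factorial_succ, Nat.factorial_zero]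
    have h1 := Nat.factorial_ne_zero n
    have h2 := Nat.factorial_ne_zero (2 * n)
    push_cast
    field_simp
    simp
  | succ m ih =>
    intro n
    have key : (∫ q in (0 : ℝ)..a, ((2 * n + 1 : ℝ) * (q ^ (2 * n) * (a ^ 2 - q ^ 2) ^ (m + 1))
        - (2 * (m + 1) : ℝ) * (q ^ (2 * (n + 1)) * (a ^ 2 - q ^ 2) ^ m))) = 0 := by
      rw [integral_eq_sub_of_hasDerivAt (f := fun q => q ^ (2 * n + 1) * (a ^ 2 - q ^ 2) ^ (m + 1))]
      · simp
      · intro q _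
        have h1 := hasDerivAt_pow (2 * n + 1) q
        have h2 := ((hasDerivAt_pow 2 q).const_sub (a ^ 2)).pow (m + 1)
        convert! h1.mul h2 using 1
        simp
        ring
      · apply Continuous.intervalIntegrable
        fun_prop
    rw [intervalIntegral.integral_sub (by apply Continuous.intervalIntegrable; fun_prop)
      (by apply Continuous.intervalIntegrable; fun_prop), intervalIntegral.integral_const_mul,
      intervalIntegral.integral_const_mul, ih (n + 1)] at key
    have e1 : n + 1 + m = n + (m + 1) := by ring
    rw [e1] at key
    have h0 : (2 * n + 1 : ℝ) ≠ 0 := by positivity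
    have this := eq_div_of_mul_eq h0 ((mul_comm _ _).trans (sub_eq_zero.mp key))
    rw [this]
    have e2 : 2 * (n + 1) = 2 * n + 1 + 1 := by ring
    rw [e2, Nat.factorial_succ (2 * n + 1), Nat.factorial_succ (2 * n), Nat.factorial_succ n,
      Nat.factorial_succ m]
    have h1 := Nat.factorial_ne_zero n
    have h2 := Nat.factorial_ne_zero (2 * n)
    have h3 := Nat.factorial_ne_zero (2 * (n + (m + 1)) + 1)
    push_cast
    field_simp
    ring

theorem sin_int (m : ℕ) : (∫ θ in (0 : ℝ)..Real.pi, Real.sin θ ^ (2 * m)) =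
    Real.pi * ((2 * m).factorial / (4 ^ m * (m.factorial : ℝ) ^ 2)) := by
  rw [integral_sin_pow_even]
  congr 1
  induction m with
  | zero => simp
  | succ m ih =>
    rw [Finset.prod_range_succ, ih, show 2 * (m + 1) = 2 * m + 1 + 1 by ring,
      Nat.factorial_succ (2 * m + 1), Nat.factorial_succ (2 * m), Nat.factorial_succ m]
    have h1 := Nat.factorial_ne_zero m
    push_cast
    field_simp
    ring

theorem J0_series (x : ℝ) :
    HasSum (fun m : ℕ => (-1) ^ m * x ^ (2 * m) / (4 ^ m * (m.factorial : ℝ) ^ 2)) (besselJ0 x) := by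
  have hs : Summable (fun m : ℕ => |x| ^ (2 * m) / ((2 * m).factorial : ℝ)) :=
    (Real.hasSum_cosh |x|).summable
  have := intervalIntegral.hasSum_integral_of_dominated_convergence (μ := volume)
    (a := 0) (b := Real.pi)
    (F := fun (m : ℕ) θ => (-1) ^ m * (x * Real.sin θ) ^ (2 * m) / ((2 * m).factorial : ℝ))
    (f := fun θ => Real.cos (x * Real.sin θ))
    (fun m _ => |x| ^ (2 * m) / ((2 * m).factorial : ℝ))
    (fun m => by
      apply Continuous.aestronglyMeasurable; fun_prop)
    (fun m => by
      refine Filter.Eventually.of_forall fun θ _ => ?_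
      rw [norm_div, norm_mul, norm_pow, norm_pow, norm_neg, norm_one, one_pow, one_mul,
        Real.norm_natCast]
      gcongr
      rw [Real.norm_eq_abs, abs_mul]
      exact mul_le_of_le_one_right (abs_nonneg _) (Real.abs_sin_le_one θ))
    (Filter.Eventually.of_forall fun θ _ => hs)
    intervalIntegrable_const
    (Filter.Eventually.of_forall fun θ _ => Real.hasSum_cos _)
  have h2 := this.mul_left (1 / Real.pi)
  unfold besselJ0
  convert! h2 using 1
  funext m
  have : ∀ θ : ℝ, (-1) ^ m * (x * Real.sin θ) ^ (2 * m) / ((2 * m).factorial : ℝ) =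
    ((-1) ^ m * x ^ (2 * m) / ((2 * m).factorial : ℝ)) * Real.sin θ ^ (2 * m) := by
    intro θ; ring
  simp only [this]
  rw [intervalIntegral.integral_const_mul, sin_int]
  have h1 := Nat.factorial_ne_zero (2 * m)
  have h3 := Real.pi_ne_zero
  field_simp

theorem term_int (a h : ℝ) (ha : 0 < a) (w : ℂ) : ∀ p : ℕ × ℕ, (∫ q in (0 : ℝ)..a,
    ((w * (q : ℂ)) ^ (2 * p.1) / ((2 * p.1).factorial : ℂ)) *
    (((-1) ^ p.2 * (h * Real.sqrt (a ^ 2 - q ^ 2)) ^ (2 * p.2) /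
      (4 ^ p.2 * (p.2.factorial : ℝ) ^ 2) : ℝ) : ℂ)) =
    (w ^ 2) ^ p.1 * (-(h : ℂ) ^ 2) ^ p.2 * ((p.1 + p.2).choose p.1 : ℂ) *
      ((a : ℂ) ^ (2 * (p.1 + p.2) + 1) / ((2 * (p.1 + p.2) + 1).factorial : ℂ)) := by
  rintro ⟨n, m⟩
  have e : ∀ q ∈ Set.uIcc 0 a, ((w * (q : ℂ)) ^ (2 * n) / ((2 * n).factorial : ℂ)) *
    (((-1) ^ m * (h * Real.sqrt (a ^ 2 - q ^ 2)) ^ (2 * m) /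
      (4 ^ m * (m.factorial : ℝ) ^ 2) : ℝ) : ℂ) =
      (w ^ (2 * n) / ((2 * n).factorial : ℂ) * (-(h : ℂ) ^ 2) ^ m /
        (4 ^ m * (m.factorial : ℂ) ^ 2)) *
        ((q ^ (2 * n) * (a ^ 2 - q ^ 2) ^ m : ℝ) : ℂ) := by
    intro q hq
    rw [Set.uIcc_of_le ha.le] at hq
    have : (h * Real.sqrt (a ^ 2 - q ^ 2)) ^ (2 * m) = (h ^ 2) ^ m * (a ^ 2 - q ^ 2) ^ m := by
      rw [pow_mul, mul_pow, Real.sq_sqrt (by nlinarith [hq.1, hq.2]), mul_pow]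
    rw [this, neg_pow ((h : ℂ) ^ 2)]
    push_cast
    ring
  simp only
  rw [intervalIntegral.integral_congr e, intervalIntegral.integral_const_mul,
    intervalIntegral.integral_ofReal, mom_integral, Nat.cast_add_choose]
  have h1 := Nat.factorial_ne_zero n
  have h2 := Nat.factorial_ne_zero (2 * n)
  have h3 := Nat.factorial_ne_zero m
  have h4 := Nat.factorial_ne_zero (2 * (n + m) + 1)
  push_cast
  have h1' : (n.factorial : ℂ) ≠ 0 := by exact_mod_cast h1
  have h2' : ((2 * n).factorial : ℂ) ≠ 0 := by exact_mod_cast h2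
  have h3' : (m.factorial : ℂ) ≠ 0 := by exact_mod_cast h3
  have h4' : ((2 * (n + m) + 1).factorial : ℂ) ≠ 0 := by exact_mod_cast h4
  field_simp
  ring

theorem coll_sum (a h : ℝ) (w μ : ℂ)
    (hμ : μ ^ 2 = (h : ℂ) ^ 2 - w ^ 2) : ∀ N : ℕ, (∑ b : Finset.HasAntidiagonal.antidiagonal N, ((fun p : ℕ × ℕ =>
    (w ^ 2) ^ p.1 * (-(h : ℂ) ^ 2) ^ p.2 * ((p.1 + p.2).choose p.1 : ℂ) *
      ((a : ℂ) ^ (2 * (p.1 + p.2) + 1) / ((2 * (p.1 + p.2) + 1).factorial : ℂ))) ∘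
      Finset.HasAntidiagonal.sigmaAntidiagonalEquivProd) ⟨N, b⟩) =
    (-1) ^ N * (μ ^ 2) ^ N * (a : ℂ) ^ (2 * N + 1) / ((2 * N + 1).factorial : ℂ) := by
  intro N
  have : (-1 : ℂ) ^ N * (μ ^ 2) ^ N = (w ^ 2 + -(h : ℂ) ^ 2) ^ N := by
    rw [← mul_pow, hμ]; congr 1; ring
  rw [this, add_pow, ← Finset.Nat.sum_antidiagonal_eq_sum_range_succ_mk
    (f := fun p : ℕ × ℕ => (w ^ 2) ^ p.1 * (-(h : ℂ) ^ 2) ^ p.2 * (N.choose p.1 : ℂ)), mul_div_assoc,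
    Finset.sum_mul, ← Finset.sum_coe_sort (Finset.HasAntidiagonal.antidiagonal N)]
  refine Finset.sum_congr rfl fun b _ => ?_
  have hb := Finset.HasAntidiagonal.mem_antidiagonal.mp b.2
  simp [hb]

theorem bd1 (a : ℝ) (w : ℂ) : ∀ (n : ℕ) (q : ℝ), 0 ≤ q → q ≤ a → ‖(w * (q : ℂ)) ^ (2 * n) / ((2 * n).factorial : ℂ)‖ ≤
    (‖w‖ * a) ^ (2 * n) / ((2 * n).factorial : ℝ) := by
  intro n q h0 h1
  rw [norm_div, norm_pow, norm_mul, Complex.norm_natCast, Complex.norm_real,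
    Real.norm_of_nonneg h0]
  gcongr

theorem bd2 (a h : ℝ) (ha : 0 < a) (hh : 0 < h) : ∀ (m : ℕ) (q : ℝ), 0 ≤ q → q ≤ a →
    ‖(((-1) ^ m * (h * Real.sqrt (a ^ 2 - q ^ 2)) ^ (2 * m) /
      (4 ^ m * (m.factorial : ℝ) ^ 2) : ℝ) : ℂ)‖ ≤ ((h * a) ^ 2) ^ m / (m.factorial : ℝ) := by
  intro m q h0 h1
  have hsq : Real.sqrt (a ^ 2 - q ^ 2) ≤ a := by
    rw [Real.sqrt_le_left ha.le]; nlinarith [sq_nonneg q]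
  have hf : (1 : ℝ) ≤ m.factorial := by exact_mod_cast Nat.factorial_pos m
  have h4 : (1 : ℝ) ≤ 4 ^ m := one_le_pow₀ (by norm_num)
  rw [Complex.norm_real, norm_div, norm_mul, norm_pow, norm_neg, norm_one, one_pow, one_mul,
    Real.norm_of_nonneg (by positivity), Real.norm_of_nonneg (by positivity), pow_mul]
  gcongr
  nlinarith

theorem gen_sum (a : ℝ) (ha : 0 < a) (A B : ℕ → ℝ → ℂ) (f g : ℝ → ℂ) (α β : ℕ → ℝ)
    (hA : ∀ n, Continuous (A n)) (hB : ∀ n, Continuous (B n))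
    (hα : Summable α) (hβ : Summable β) (α0 : ∀ n, 0 ≤ α n) (β0 : ∀ n, 0 ≤ β n)
    (bA : ∀ n q, 0 ≤ q → q ≤ a → ‖A n q‖ ≤ α n) (bB : ∀ n q, 0 ≤ q → q ≤ a → ‖B n q‖ ≤ β n)
    (sA : ∀ q, HasSum (fun n => A n q) (f q)) (sB : ∀ q, HasSum (fun n => B n q) (g q)) :
    HasSum (fun p : ℕ × ℕ => ∫ q in (0 : ℝ)..a, A p.1 q * B p.2 q)
      (∫ q in (0 : ℝ)..a, f q * g q) := by
  have hs : Summable (fun p : ℕ × ℕ => α p.1 * β p.2) := hα.mul_of_nonneg hβ α0 β0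
  have bd : ∀ (p : ℕ × ℕ) (q : ℝ), q ∈ Set.uIoc 0 a → ‖A p.1 q * B p.2 q‖ ≤ α p.1 * β p.2 := by
    intro p q hq
    rw [Set.uIoc_of_le ha.le] at hq
    rw [norm_mul]
    exact mul_le_mul (bA _ _ hq.1.le hq.2) (bB _ _ hq.1.le hq.2) (norm_nonneg _) (α0 _)
  refine intervalIntegral.hasSum_integral_of_dominated_convergence
    (fun p _ => α p.1 * β p.2) (fun p => ?_) (fun p => Filter.Eventually.of_forall (bd p))
    (Filter.Eventually.of_forall fun q _ => hs) intervalIntegrable_const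
    (Filter.Eventually.of_forall fun q hq => ?_)
  · exact ((hA p.1).mul (hB p.2)).aestronglyMeasurable
  · have h1 : Summable (fun p : ℕ × ℕ => A p.1 q * B p.2 q) :=
      Summable.of_norm_bounded hs (fun p => bd p q hq)
    have h2 := HasSum.mul (f := fun n => A n q) (g := fun n => B n q) (sA q) (sB q) h1
    exact h2

theorem main_sum (a h : ℝ) (ha : 0 < a) (hh : 0 < h) (w : ℂ) :
    HasSum (fun p : ℕ × ℕ => ∫ q in (0 : ℝ)..a,
      ((w * (q : ℂ)) ^ (2 * p.1) / ((2 * p.1).factorial : ℂ)) *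
      (((-1) ^ p.2 * (h * Real.sqrt (a ^ 2 - q ^ 2)) ^ (2 * p.2) /
        (4 ^ p.2 * (p.2.factorial : ℝ) ^ 2) : ℝ) : ℂ))
    (∫ q in (0 : ℝ)..a, Complex.cosh (w * (q : ℂ)) *
          (besselJ0 (h * Real.sqrt (a ^ 2 - q ^ 2)) : ℂ)) := by
  refine gen_sum a ha
    (fun n q => (w * (q : ℂ)) ^ (2 * n) / ((2 * n).factorial : ℂ))
    (fun m q => (((-1) ^ m * (h * Real.sqrt (a ^ 2 - q ^ 2)) ^ (2 * m) /
        (4 ^ m * (m.factorial : ℝ) ^ 2) : ℝ) : ℂ))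
    (fun q => Complex.cosh (w * (q : ℂ)))
    (fun q => (besselJ0 (h * Real.sqrt (a ^ 2 - q ^ 2)) : ℂ))
    (fun n => (‖w‖ * a) ^ (2 * n) / ((2 * n).factorial : ℝ))
    (fun m => ((h * a) ^ 2) ^ m / (m.factorial : ℝ)) ?_ ?_ ?_ ?_ ?_ ?_ ?_ ?_ ?_ ?_
  · intro n
    exact ((continuous_const.mul Complex.continuous_ofReal).pow _).div_const _
  · intro m
    apply Complex.continuous_ofReal.comp
    apply Continuous.div_const
    fun_prop
  · exact (Real.hasSum_cosh (‖w‖ * a)).summable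
  · exact Real.summable_pow_div_factorial _
  · intro n; positivity
  · intro n; positivity
  · exact bd1 a w
  · exact bd2 a h ha hh
  · intro q; exact Complex.hasSum_cosh _
  · intro q; exact Complex.hasSum_ofReal.mpr (J0_series _)

/-- the Bessel integral
`∫₀^a cosh(wq) J₀(h√(a²-q²)) dq = sin(a√(h²-w²))/√(h²-w²)`, for any complex
square root `μ` of `h² - w²` (the right side is even in `μ`, interpreted as
`a` when `μ = 0`). -/
theorem statement12 (a h : ℝ) (ha : 0 < a) (hh : 0 < h) (w μ : ℂ)
    (hμ : μ ^ 2 = (h : ℂ) ^ 2 - w ^ 2) :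
    (∫ q in (0 : ℝ)..a,
        Complex.cosh (w * (q : ℂ)) *
          (besselJ0 (h * Real.sqrt (a ^ 2 - q ^ 2)) : ℂ)) =
      if μ = 0 then (a : ℂ) else Complex.sin ((a : ℂ) * μ) / μ := by
  have main := main_sum a h ha hh w
  have term := term_int a h ha w
  simp only [term] at main
  rw [← Finset.HasAntidiagonal.sigmaAntidiagonalEquivProd.hasSum_iff] at main
  have main2 := main.sigma (fun N => hasSum_fintype _)
  have coll := coll_sum a h w μ hμ
  simp only [coll] at main2
  refine main2.unique ?_
  split_ifs with h0
  · subst h0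
    have := hasSum_single (f := fun N : ℕ => (-1 : ℂ) ^ N * ((0 : ℂ) ^ 2) ^ N *
      (a : ℂ) ^ (2 * N + 1) / ((2 * N + 1).factorial : ℂ)) 0 (fun N hN => by simp [hN])
    simpa using this
  · convert! (Complex.hasSum_sin ((a : ℂ) * μ)).div_const μ using 1
    funext N
    field_simp
    ring
end

section
/- Let a > 0, h ≥ 0, l, ω ∈ ℝ, and ε > 0. Set η = ε - i, |η| = √(1+ε²), ω_ε = ω - iεl, l_ε = l - iεω, h_ε = |η| h, and let μ_ε be a complex square root of h_ε² - ω_ε² (the right-hand side below is even in μ_ε). Write ρ₀(q) = √(a² - q²). Then cosh(ω_ε a) - iε sinh(ω_ε a) + ((1+ε²)/2) ∫_{-a}^{a} e^{ω_ε q} [ -(h(a - iεq)/(|η| ρ₀(q))) J₁(h_ε ρ₀(q)) + l J₀(h_ε ρ₀(q)) ] dq = cos(μ_ε a) + (l_ε/μ_ε) sin(μ_ε a), where J₀(x) = (1/π)∫₀^π cos(x sin θ) dθ and J₁(x) = (1/π)∫₀^π cos(θ - x sin θ) dθ are the Bessel functions of the first kind (the case μ_ε = 0 is interpreted by continuity,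 sin(μ_ε a)/μ_ε = a). -/
open Real MeasureTheory intervalIntegral

lemma dui {E : Type*} [NormedAddCommGroup E] [NormedSpace ℝ E] [CompleteSpace E]
    {f f' : ℝ → ℝ → E} (hf : ∀ t, Continuous (f t))
    (hf' : Continuous (Function.uncurry f'))
    (hd : ∀ t x, HasDerivAt (fun s => f s x) (f' t x) t) (a b t₀ : ℝ) :
    HasDerivAt (fun t => ∫ x in a..b, f t x) (∫ x in a..b, f' t₀ x) t₀ := by
  obtain ⟨M, hM⟩ := ((isCompact_Icc (a := t₀ - 1) (b := t₀ + 1)).prod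
    (isCompact_uIcc (a := a) (b := b))).exists_bound_of_continuousOn hf'.continuousOn
  refine (intervalIntegral.hasDerivAt_integral_of_dominated_loc_of_deriv_le
    (bound := fun _ => M) (F' := f')
    (Icc_mem_nhds (a := t₀ - 1) (b := t₀ + 1) (by linarith) (by linarith))
    (Filter.Eventually.of_forall fun t => (hf t).aestronglyMeasurable)
    ((hf t₀).intervalIntegrable _ _) ?_ ?_ (by simp) ?_).2
  · exact (hf'.comp (Continuous.prodMk_right t₀)).aestronglyMeasurable
  · refine Filter.Eventually.of_forall fun x hx t ht => hM (t, x) ⟨ht, Set.uIoc_subset_uIcc hx⟩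
  · exact Filter.Eventually.of_forall fun x _ t _ => hd t x

noncomputable def besselK (x : ℝ) : ℝ :=
  (1 / Real.pi) * ∫ θ in (0 : ℝ)..Real.pi, Real.cos θ ^ 2 * Real.cos (x * Real.sin θ)

lemma besselJ1_eq (x : ℝ) :
    besselJ1 x = (1 / Real.pi) * ∫ θ in (0 : ℝ)..Real.pi, Real.sin θ * Real.sin (x * Real.sin θ) := by
  unfold besselJ1
  congr 1
  have h1 : ∫ θ in (0 : ℝ)..Real.pi, Real.cos θ * Real.cos (x * Real.sin θ) = 0 := by
    have := intervalIntegral.integral_comp_sub_left (a := 0) (b := Real.pi)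
      (fun θ => Real.cos θ * Real.cos (x * Real.sin θ)) Real.pi
    simp only [Real.cos_pi_sub, Real.sin_pi_sub, sub_self, sub_zero, neg_mul,
      intervalIntegral.integral_neg] at this
    linarith
  simp_rw [Real.cos_sub]
  rw [intervalIntegral.integral_add, h1, zero_add] <;>
  exact Continuous.intervalIntegrable (by fun_prop) _ _

lemma besselJ1_eq_mul (x : ℝ) : besselJ1 x = x * besselK x := by
  rw [besselJ1_eq, besselK]
  have h : ∫ θ in (0 : ℝ)..Real.pi, (Real.sin θ * Real.sin (x * Real.sin θ) -
      x * (Real.cos θ ^ 2 * Real.cos (x * Real.sin θ))) = 0 := by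
    rw [intervalIntegral.integral_eq_sub_of_hasDerivAt
      (f := fun θ => - Real.cos θ * Real.sin (x * Real.sin θ))]
    · simp
    · intro θ _
      convert! (Real.hasDerivAt_cos θ).neg.mul ((Real.hasDerivAt_sin θ).const_mul x).sin using 1
      simp; ring
    · exact Continuous.intervalIntegrable (by fun_prop) _ _
  rw [intervalIntegral.integral_sub, intervalIntegral.integral_const_mul] at h
  · linear_combination (1 / Real.pi) * h
  all_goals exact Continuous.intervalIntegrable (by fun_prop) _ _

lemma hasDerivAt_J0 (x : ℝ) : HasDerivAt besselJ0 (-besselJ1 x) x := by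
  have := (dui (f := fun x θ => Real.cos (x * Real.sin θ))
    (f' := fun x θ => -(Real.sin θ * Real.sin (x * Real.sin θ))) (by intro t; fun_prop)
    (by unfold Function.uncurry; fun_prop) (by
      intro t y
      convert! ((hasDerivAt_id t).mul_const (Real.sin y)).cos using 1
      simp; ring) 0 Real.pi x).const_mul (1 / Real.pi)
  convert! this using 1
  rw [besselJ1_eq, intervalIntegral.integral_neg]; ring

lemma hasDerivAt_J1 (x : ℝ) : HasDerivAt besselJ1 (besselJ0 x - besselK x) x := by
  have := (dui (f := fun x θ => Real.sin θ * Real.sin (x * Real.sin θ))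
    (f' := fun x θ => Real.sin θ ^ 2 * Real.cos (x * Real.sin θ)) (by intro t; fun_prop)
    (by unfold Function.uncurry; fun_prop) (by
      intro t y
      convert! (((hasDerivAt_id t).mul_const (Real.sin y)).sin).const_mul (Real.sin y) using 1
      simp; ring) 0 Real.pi x).const_mul (1 / Real.pi)
  rw [funext besselJ1_eq]
  convert! this using 1
  rw [besselJ0, besselK, ← mul_sub, ← intervalIntegral.integral_sub]
  · congr 2; ext θ; rw [Real.sin_sq]; ring
  all_goals exact Continuous.intervalIntegrable (by fun_prop) _ _

@[fun_prop] lemma continuous_J0 : Continuous besselJ0 :=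
  continuous_iff_continuousAt.2 fun x => (hasDerivAt_J0 x).continuousAt
@[fun_prop] lemma continuous_J1 : Continuous besselJ1 :=
  continuous_iff_continuousAt.2 fun x => (hasDerivAt_J1 x).continuousAt
@[fun_prop] lemma continuous_K : Continuous besselK := by
  unfold besselK
  exact continuous_const.mul (intervalIntegral.continuous_parametric_intervalIntegral_of_continuous'
    (by unfold Function.uncurry; fun_prop) _ _)
lemma besselJ0_zero : besselJ0 0 = 1 := by
  simp [besselJ0, Real.pi_ne_zero]

/-- common exponential factor -/
noncomputable def eF (w : ℂ) (t φ : ℝ) : ℂ := Complex.exp (w * t * (Real.sin φ : ℝ))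

lemma eF_t (w : ℂ) (t φ : ℝ) :
    HasDerivAt (fun s => eF w s φ) (eF w t φ * (w * (Real.sin φ : ℝ))) t := by
  unfold eF
  have := (((hasDerivAt_id t).ofReal_comp.const_mul w).mul_const ((Real.sin φ : ℝ) : ℂ)).cexp
  convert! this using 1
  simp

lemma eF_φ (w : ℂ) (t φ : ℝ) :
    HasDerivAt (fun s => eF w t s) (eF w t φ * (w * t * (Real.cos φ : ℝ))) φ := by
  unfold eF
  exact ((Real.hasDerivAt_sin φ).ofReal_comp.const_mul (w * t)).cexp

@[fun_prop] lemma eF_cont (w : ℂ) : Continuous (fun p : ℝ × ℝ => eF w p.1 p.2) := by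
  unfold eF; fun_prop
@[fun_prop] lemma eF_cont' (w : ℂ) (t : ℝ) : Continuous (fun p : ℝ => eF w t p) := by
  unfold eF; fun_prop

lemma J0_t (H t φ : ℝ) : HasDerivAt (fun s : ℝ => ((besselJ0 (H * s * Real.cos φ) : ℝ) : ℂ))
    ((-(besselJ1 (H * t * Real.cos φ)) * (H * Real.cos φ) : ℝ) : ℂ) t := by
  have := (hasDerivAt_J0 (H * t * Real.cos φ)).comp t
    (((hasDerivAt_id t).const_mul H).mul_const (Real.cos φ))
  simpa using this.ofReal_comp

lemma J1_t (H t φ : ℝ) : HasDerivAt (fun s : ℝ => ((besselJ1 (H * s * Real.cos φ) : ℝ) : ℂ))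
    (((besselJ0 (H * t * Real.cos φ) - besselK (H * t * Real.cos φ)) * (H * Real.cos φ) : ℝ) : ℂ) t := by
  have := (hasDerivAt_J1 (H * t * Real.cos φ)).comp t
    (((hasDerivAt_id t).const_mul H).mul_const (Real.cos φ))
  simpa using this.ofReal_comp

lemma J0_φ (H t φ : ℝ) : HasDerivAt (fun s : ℝ => ((besselJ0 (H * t * Real.cos s) : ℝ) : ℂ))
    ((besselJ1 (H * t * Real.cos φ) * (H * t * Real.sin φ) : ℝ) : ℂ) φ := by
  have := (hasDerivAt_J0 (H * t * Real.cos φ)).comp φ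
    ((Real.hasDerivAt_cos φ).const_mul (H * t))
  convert! this.ofReal_comp using 1
  push_cast; ring

noncomputable def IA (w : ℂ) (H t : ℝ) : ℂ := ∫ φ in (-(π / 2))..(π / 2),
  eF w t φ * (besselJ0 (H * t * Real.cos φ) : ℝ) * (Real.cos φ : ℝ)
noncomputable def IB (w : ℂ) (H t : ℝ) : ℂ := ∫ φ in (-(π / 2))..(π / 2),
  eF w t φ * (besselJ1 (H * t * Real.cos φ) : ℝ) * (Real.sin φ : ℝ)
noncomputable def IC (w : ℂ) (H t : ℝ) : ℂ := ∫ φ in (-(π / 2))..(π / 2),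
  eF w t φ * (besselJ1 (H * t * Real.cos φ) : ℝ)

lemma two_cosh (z : ℂ) : 2 * Complex.cosh z = Complex.exp z + Complex.exp (-z) := by
  rw [Complex.cosh]; ring
lemma two_sinh (z : ℂ) : 2 * Complex.sinh z = Complex.exp z - Complex.exp (-z) := by
  rw [Complex.sinh]; ring

lemma id_sinh (w : ℂ) (H t : ℝ) :
    w * t * IA w H t + H * t * IB w H t = 2 * Complex.sinh (w * t) := by
  unfold IA IB
  rw [← intervalIntegral.integral_const_mul, ← intervalIntegral.integral_const_mul,
    ← intervalIntegral.integral_add, intervalIntegral.integral_eq_sub_of_hasDerivAt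
      (f := fun φ => eF w t φ * (besselJ0 (H * t * Real.cos φ) : ℝ))]
  · simp [eF, besselJ0_zero, two_sinh]
  · intro φ _
    convert! (eF_φ w t φ).mul (J0_φ H t φ) using 1
    push_cast; ring
  all_goals exact Continuous.intervalIntegrable (by fun_prop) _ _

lemma id_cosh (w : ℂ) (H t : ℝ) :
    ∫ φ in (-(π / 2))..(π / 2), (eF w t φ * (besselJ0 (H * t * Real.cos φ) : ℝ) * (Real.cos φ : ℝ)
      + w * t * (Real.sin φ : ℝ) * (Real.cos φ : ℝ) * eF w t φ * (besselJ0 (H * t * Real.cos φ) : ℝ)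
      + H * t * (Real.sin φ : ℝ) ^ 2 * eF w t φ * (besselJ1 (H * t * Real.cos φ) : ℝ))
     = 2 * Complex.cosh (w * t) := by
  rw [intervalIntegral.integral_eq_sub_of_hasDerivAt
      (f := fun φ => eF w t φ * (besselJ0 (H * t * Real.cos φ) : ℝ) * (Real.sin φ : ℝ))]
  · simp [eF, besselJ0_zero, two_cosh]
  · intro φ _
    convert! ((eF_φ w t φ).mul (J0_φ H t φ)).mul (Real.hasDerivAt_sin φ).ofReal_comp using 1
    simp only [Pi.mul_apply]
    push_cast; ring
  all_goals exact Continuous.intervalIntegrable (by fun_prop) _ _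

noncomputable def FF (w : ℂ) (H t : ℝ) : ℂ := t / 2 * IA w H t
noncomputable def CC (w : ℂ) (H t : ℝ) : ℂ := Complex.cosh (w * t) - H * t / 2 * IC w H t

lemma FF_deriv (w : ℂ) (H t : ℝ) : HasDerivAt (FF w H) (CC w H t) t := by
  have h1 : HasDerivAt (IA w H) _ t := dui
    (f := fun t φ => eF w t φ * (besselJ0 (H * t * Real.cos φ) : ℝ) * (Real.cos φ : ℝ))
    (f' := fun t φ => (eF w t φ * (w * (Real.sin φ : ℝ)) * (besselJ0 (H * t * Real.cos φ) : ℝ) +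
      eF w t φ * ((-(besselJ1 (H * t * Real.cos φ)) * (H * Real.cos φ) : ℝ) : ℂ)) * (Real.cos φ : ℝ))
    (by intro t; fun_prop)
    (by unfold Function.uncurry; fun_prop)
    (fun t φ => ((eF_t w t φ).mul (J0_t H t φ)).mul_const _) (-(π / 2)) (π / 2) t
  have h2 := ((hasDerivAt_id t).ofReal_comp.div_const 2).mul h1
  convert! h2 using 1
  have h3 := id_cosh w H t
  unfold CC IA IC
  rw [eq_comm, ← sub_eq_zero] at h3
  rw [show Complex.cosh (w * t) = (2 * Complex.cosh (w * t)) / 2 by ring, ← id_cosh w H t]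
  simp only [id, Complex.ofReal_one, div_eq_inv_mul, mul_one]
  simp only [← intervalIntegral.integral_const_mul]
  rw [← intervalIntegral.integral_add, ← intervalIntegral.integral_sub]
  · apply intervalIntegral.integral_congr
    intro φ _
    have := Complex.sin_sq_add_cos_sq φ
    simp only
    push_cast
    linear_combination (H * t / 2 * eF w t φ * (besselJ1 (H * t * Real.cos φ) : ℝ)) * this
  all_goals exact Continuous.intervalIntegrable (by fun_prop) _ _

lemma CC_deriv (w : ℂ) (H t : ℝ) :
    HasDerivAt (CC w H) (-((H : ℂ) ^ 2 - w ^ 2) * FF w H t) t := by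
  have h1 : HasDerivAt (IC w H) _ t := dui
    (f := fun t φ => eF w t φ * (besselJ1 (H * t * Real.cos φ) : ℝ))
    (f' := fun t φ => (eF w t φ * (w * (Real.sin φ : ℝ)) * (besselJ1 (H * t * Real.cos φ) : ℝ) +
      eF w t φ * (((besselJ0 (H * t * Real.cos φ) - besselK (H * t * Real.cos φ)) * (H * Real.cos φ) : ℝ) : ℂ)))
    (by intro t; fun_prop)
    (by unfold Function.uncurry; fun_prop)
    (fun t φ => ((eF_t w t φ).mul (J1_t H t φ))) (-(π / 2)) (π / 2) t
  have h0 := ((hasDerivAt_id (t : ℂ)).const_mul w).ccosh.comp_ofReal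
  have h2 := h0.sub (((((hasDerivAt_id t).ofReal_comp.const_mul (H : ℂ)).div_const 2)).mul h1)
  convert! h2 using 1
  have h3 := id_sinh w H t
  have h4 : (H : ℂ) * IC w H t + H * t * ∫ φ in (-(π / 2))..(π / 2),
      (eF w t φ * (w * (Real.sin φ : ℝ)) * (besselJ1 (H * t * Real.cos φ) : ℝ) +
      eF w t φ * (((besselJ0 (H * t * Real.cos φ) - besselK (H * t * Real.cos φ)) * (H * Real.cos φ) : ℝ) : ℂ))
      = H * t * w * IB w H t + H ^ 2 * t * IA w H t := by
    unfold IA IB IC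
    simp only [← intervalIntegral.integral_const_mul]
    rw [← intervalIntegral.integral_add, ← intervalIntegral.integral_add]
    · apply intervalIntegral.integral_congr
      intro φ _
      simp only [besselJ1_eq_mul]
      push_cast
      ring
    all_goals exact Continuous.intervalIntegrable (by fun_prop) _ _
  simp only [id, Complex.ofReal_one, mul_one]
  unfold FF
  linear_combination (1 / 2) * h4 + (w / 2) * h3

lemma const_of (f : ℝ → ℂ) (h : ∀ t, HasDerivAt f 0 t) (t : ℝ) : f t = f 0 :=
  is_const_of_deriv_eq_zero (fun t => (h t).differentiableAt) (fun t => (h t).deriv) t 0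

lemma FF_CC (w μ : ℂ) (H : ℝ) (hμ : μ ^ 2 = (H : ℂ) ^ 2 - w ^ 2) (t : ℝ) :
    CC w H t = Complex.cos (μ * t) ∧
    FF w H t = if μ = 0 then (t : ℂ) else Complex.sin (μ * t) / μ := by
  have F0 : FF w H 0 = 0 := by simp [FF]
  have C0 : CC w H 0 = 1 := by simp [CC]
  have hC := fun t => CC_deriv w H t
  have hF := fun t => FF_deriv w H t
  rw [← hμ] at hC
  by_cases h : μ = 0
  · have c1 : ∀ t, CC w H t = 1 := fun t => by
      rw [← C0]; exact const_of _ (fun t => by simpa [h] using hC t) t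
    refine ⟨by simp [h, c1], ?_⟩
    have := const_of (fun t => FF w H t - t) (fun t => by
      convert! (hF t).sub (hasDerivAt_id t).ofReal_comp using 1
      simp [c1]) t
    simp only [F0] at this
    simp only [h, if_true]
    simpa [sub_eq_zero] using this
  · have hs : ∀ t : ℝ, HasDerivAt (fun s : ℝ => Complex.sin (μ * (s : ℂ)))
        (Complex.cos (μ * t) * μ) t := fun t => by
      simpa using ((hasDerivAt_id (t : ℂ)).const_mul μ).csin.comp_ofReal
    have hc : ∀ t : ℝ, HasDerivAt (fun s : ℝ => Complex.cos (μ * (s : ℂ)))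
        (-Complex.sin (μ * t) * μ) t := fun t => by
      simpa using ((hasDerivAt_id (t : ℂ)).const_mul μ).ccos.comp_ofReal
    have e1 := const_of (fun t => CC w H t * Complex.cos (μ * t) + μ * FF w H t * Complex.sin (μ * t))
      (fun t => by
        convert! ((hC t).mul (hc t)).add (((hF t).const_mul μ).mul (hs t)) using 1
        ring) t
    have e2 := const_of (fun t => CC w H t * Complex.sin (μ * t) - μ * FF w H t * Complex.cos (μ * t))
      (fun t => by
        convert! ((hC t).mul (hs t)).sub (((hF t).const_mul μ).mul (hc t)) using 1
        ring) t
    simp [F0, C0] at e1 e2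
    have e3 := Complex.sin_sq_add_cos_sq (μ * t)
    rw [if_neg h, eq_div_iff h]
    constructor
    · linear_combination Complex.cos (μ * t) * e1 + Complex.sin (μ * t) * e2 - CC w H t * e3
    · linear_combination Complex.sin (μ * t) * e1 - Complex.cos (μ * t) * e2 - μ * FF w H t * e3

lemma cov_lemma (a : ℝ) (ha : 0 < a) (g : ℝ → ℂ) :
    ∫ q in (-a)..a, g q = ∫ φ in (-(π / 2))..(π / 2), ((a * Real.cos φ : ℝ) : ℂ) * g (a * Real.sin φ) := by
  have hp : -(π / 2) ≤ π / 2 := by linarith [Real.pi_pos]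
  have := intervalIntegral.integral_deriv_smul_comp_of_deriv_nonneg (a := -(π / 2)) (b := π / 2)
    (f := fun φ => a * Real.sin φ) (f' := fun φ => a * Real.cos φ) (g := g)
    (by fun_prop) (fun φ _ => (Real.hasDerivAt_sin φ).const_mul a) (by
      intro φ hφ
      rw [min_eq_left hp, max_eq_right hp] at hφ
      have := Real.cos_pos_of_mem_Ioo hφ
      positivity)
  simpa using this.symm

/-- the computational core of the Fourier transform of the
shielded complex source.  With `ω_ε = ω - iεl`, `l_ε = l - iεω`,
`h_ε = √(1+ε²) h`, `ρ₀(q) = √(a²-q²)`, and `μ_ε` any complex square root of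
`h_ε² - ω_ε²`,
`cosh(ω_ε a) - iε sinh(ω_ε a) + ((1+ε²)/2)∫_{-a}^a e^{ω_ε q}
  [-(h(a-iεq)/(√(1+ε²)ρ₀))J₁(h_ε ρ₀) + l J₀(h_ε ρ₀)] dq
  = cos(μ_ε a) + (l_ε/μ_ε) sin(μ_ε a)`
(with `sin(μ_ε a)/μ_ε = a` when `μ_ε = 0`). -/
theorem statement14 (a h l ω ε : ℝ) (ha : 0 < a) (hh : 0 ≤ h) (hε : 0 < ε)
    (με : ℂ)
    (hμ : με ^ 2 =
      ((Real.sqrt (1 + ε ^ 2) * h : ℝ) : ℂ) ^ 2 -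
        ((ω : ℂ) - Complex.I * (ε : ℂ) * (l : ℂ)) ^ 2) :
    Complex.cosh (((ω : ℂ) - Complex.I * (ε : ℂ) * (l : ℂ)) * (a : ℂ)) -
      Complex.I * (ε : ℂ) *
        Complex.sinh (((ω : ℂ) - Complex.I * (ε : ℂ) * (l : ℂ)) * (a : ℂ)) +
      (((1 + ε ^ 2) / 2 : ℝ) : ℂ) *
        ∫ q in (-a)..a,
          Complex.exp (((ω : ℂ) - Complex.I * (ε : ℂ) * (l : ℂ)) * (q : ℂ)) *
            (-((h : ℂ) * ((a : ℂ) - Complex.I * (ε : ℂ) * (q : ℂ)) /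
                ((Real.sqrt (1 + ε ^ 2) : ℂ) * (Real.sqrt (a ^ 2 - q ^ 2) : ℂ))) *
                (besselJ1 (Real.sqrt (1 + ε ^ 2) * h * Real.sqrt (a ^ 2 - q ^ 2)) : ℂ) +
              (l : ℂ) *
                (besselJ0 (Real.sqrt (1 + ε ^ 2) * h * Real.sqrt (a ^ 2 - q ^ 2)) : ℂ)) =
    Complex.cos (με * (a : ℂ)) +
      ((l : ℂ) - Complex.I * (ε : ℂ) * (ω : ℂ)) *
        (if με = 0 then (a : ℂ) else Complex.sin (με * (a : ℂ)) / με) := by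
  set w : ℂ := (ω : ℂ) - Complex.I * (ε : ℂ) * (l : ℂ) with hw
  set η : ℝ := Real.sqrt (1 + ε ^ 2) with hη
  have hη0 : 0 < η := Real.sqrt_pos.2 (by positivity)
  have hη2 : η ^ 2 = 1 + ε ^ 2 := Real.sq_sqrt (by positivity)
  have hηc : (η : ℂ) ≠ 0 := by exact_mod_cast hη0.ne'
  have hη2c : (η : ℂ) ^ 2 = 1 + (ε : ℂ) ^ 2 := by exact_mod_cast hη2
  obtain ⟨hC, hF⟩ := FF_CC w με (η * h) hμ a
  rw [← hC, ← hF]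
  have cv := cov_lemma a ha (fun q : ℝ =>
    Complex.exp (w * (q : ℂ)) *
            (-((h : ℂ) * ((a : ℂ) - Complex.I * (ε : ℂ) * (q : ℂ)) /
                ((η : ℂ) * (Real.sqrt (a ^ 2 - q ^ 2) : ℂ))) *
                (besselJ1 (η * h * Real.sqrt (a ^ 2 - q ^ 2)) : ℂ) +
              (l : ℂ) *
                (besselJ0 (η * h * Real.sqrt (a ^ 2 - q ^ 2)) : ℂ)))
  rw [cv]
  have key : (∫ φ in (-(π / 2))..(π / 2), ((a * Real.cos φ : ℝ) : ℂ) *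
      (Complex.exp (w * ((a * Real.sin φ : ℝ) : ℂ)) *
            (-((h : ℂ) * ((a : ℂ) - Complex.I * (ε : ℂ) * ((a * Real.sin φ : ℝ) : ℂ)) /
                ((η : ℂ) * (Real.sqrt (a ^ 2 - (a * Real.sin φ) ^ 2) : ℂ))) *
                (besselJ1 (η * h * Real.sqrt (a ^ 2 - (a * Real.sin φ) ^ 2)) : ℂ) +
              (l : ℂ) *
                (besselJ0 (η * h * Real.sqrt (a ^ 2 - (a * Real.sin φ) ^ 2)) : ℂ)))) =
      -(h * a / η) * IC w (η * h) a + (Complex.I * ε * (h * a / η)) * IB w (η * h) a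
        + l * a * IA w (η * h) a := by
    unfold IA IB IC
    simp only [← intervalIntegral.integral_const_mul]
    rw [← intervalIntegral.integral_add, ← intervalIntegral.integral_add]
    · apply intervalIntegral.integral_congr_Ioo_of_le (by linarith [Real.pi_pos])
      intro φ hφ
      have hc : 0 < Real.cos φ := Real.cos_pos_of_mem_Ioo hφ
      have hs : Real.sqrt (a ^ 2 - (a * Real.sin φ) ^ 2) = a * Real.cos φ := by
        rw [← Real.sqrt_sq (by positivity : 0 ≤ a * Real.cos φ)]
        congr 1
        have := Real.sin_sq_add_cos_sq φ
        linear_combination (-a ^ 2) * this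
      have hcc : ((Real.cos φ : ℝ) : ℂ) ≠ 0 := by exact_mod_cast hc.ne'
      have hac : (a : ℂ) ≠ 0 := by exact_mod_cast ha.ne'
      have he : Complex.exp (w * ((a * Real.sin φ : ℝ) : ℂ)) = eF w a φ := by
        unfold eF; push_cast; ring_nf
      simp only [hs, he]
      rw [show η * h * (a * Real.cos φ) = η * h * a * Real.cos φ by ring]
      simp only [Complex.ofReal_mul]
      field_simp
      ring
    all_goals exact Continuous.intervalIntegrable (by fun_prop) _ _
  rw [key]
  have h3 := id_sinh w (η * h) a
  unfold CC FF
  push_cast at h3 ⊢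
  have hX : (η : ℂ) ^ 2 * (h * a / η) = η * h * a := by field_simp
  have hI := Complex.I_sq
  rw [← hη2c]
  linear_combination (Complex.I * ε / 2) * h3
    + (1 / 2) * (-IC w (η * h) a + Complex.I * ε * IB w (η * h) a) * hX
    + (a / 2 * IA w (η * h) a * l) * hη2c
    - (Complex.I * ε * a / 2 * IA w (η * h) a) * hw
    + (ε ^ 2 * l * a / 2 * IA w (η * h) a) * hI
end
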